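/- Define v(m) = 1 - 4 m Γ(m/2)² / ((m-1)² π Γ((m-1)/2)²) for integers m ≥ 2. Then v is a strictly increasing function of m, i.e. v(m+1) > v(m) for all m ≥ 2. -/

import Mathlib

/-- The variance of `|Δθ|` for the Adam update at time step `m` with i.i.d. standard normal
gradients: `v m = 1 - 4 m Γ(m/2)² / ((m-1)² π Γ((m-1)/2)²)`. -/
noncomputable def absUpdateVariance (m : ℕ) : ℝ :=
  1 - 4 * m * Real.Gamma ((m : ℝ) / 2) ^ 2 /
    (((m : ℝ) - 1) ^ 2 * Real.pi * Real.Gamma (((m : ℝ) - 1) / 2) ^ 2)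

/-!
With `F x = x Γ(x)² / Γ(x + 1/2)²` the variance is `v(m) = 1 - (2/π) F(m/2)`, so it suffices that
`F` is strictly decreasing on `(0, ∞)`. The functional equation of `Γ` gives
`F x / F (x + 1) = 1 + 1 / (4 x (x + 1))`, which is strictly decreasing, and log-convexity of `Γ`
gives `F → 1` at infinity. Hence for `x < y` the sequence `F (x + n) / F (y + n)` strictly decreases
to `1`, and its term at `n = 0` exceeds `1`.
-/

open Filter Real Set Topology

section StrictAnti

variable {f : ℝ → ℝ} {a c : ℝ}

lemma strictAnti_div_shift_of_strictAntiOn_div_add_one (hpos : ∀ ⦃x⦄, a < x → 0 < f x)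
    (hstep : StrictAntiOn (fun x ↦ f x / f (x + 1)) (Ioi a)) {x y : ℝ} (hx : a < x) (hxy : x < y) :
    StrictAnti fun n : ℕ ↦ f (x + n) / f (y + n) := by
  refine strictAnti_nat_of_succ_lt fun n ↦ ?_
  have hxn : a < x + n := hx.trans_le (le_add_of_nonneg_right n.cast_nonneg)
  have hxyn : x + n < y + n := by gcongr
  have hyn : a < y + n := hxn.trans hxyn
  have hstep_lt := hstep hxn hyn hxyn
  have hx' := hpos (hxn.trans (lt_add_one _))
  have hy := hpos hyn
  have hy' := hpos (hyn.trans (lt_add_one _))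
  rw [div_lt_div_iff₀ hy' hx'] at hstep_lt
  push_cast
  rw [← add_assoc, ← add_assoc, div_lt_div_iff₀ hy' hy]
  linarith

lemma strictAntiOn_of_strictAntiOn_div_add_one_of_tendsto (hpos : ∀ ⦃x⦄, a < x → 0 < f x)
    (hstep : StrictAntiOn (fun x ↦ f x / f (x + 1)) (Ioi a)) (hlim : Tendsto f atTop (𝓝 c))
    (hc : c ≠ 0) : StrictAntiOn f (Ioi a) := by
  intro x hx y hy hxy
  have hanti := strictAnti_div_shift_of_strictAntiOn_div_add_one hpos hstep hx hxy
  have hshift (z : ℝ) : Tendsto (fun n : ℕ ↦ f (z + n)) atTop (𝓝 c) :=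
    hlim.comp (tendsto_atTop_add_const_left _ z tendsto_natCast_atTop_atTop)
  have hquot : Tendsto (fun n : ℕ ↦ f (x + n) / f (y + n)) atTop (𝓝 1) := by
    simpa only [div_self hc, Pi.div_def] using (hshift x).div (hshift y) hc
  have hone_lt : 1 < f x / f y := by
    simpa using (hanti.antitone.le_of_tendsto hquot 1).trans_lt (hanti zero_lt_one)
  exact (one_lt_div (hpos hy)).mp hone_lt

end StrictAnti

section Gamma

variable {x s : ℝ}

lemma Gamma_add_le_rpow_mul_Gamma (hx : 0 < x) (hs₀ : 0 < s) (hs₁ : s < 1) :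
    Gamma (x + s) ≤ x ^ s * Gamma x := by
  have hΓ : 0 < Gamma x := Gamma_pos_of_pos hx
  calc Gamma (x + s) = Gamma ((1 - s) * x + s * (x + 1)) := by ring_nf
    _ ≤ Gamma x ^ (1 - s) * Gamma (x + 1) ^ s :=
      Gamma_mul_add_mul_le_rpow_Gamma_mul_rpow_Gamma hx (by linarith) (by linarith) hs₀
        (by ring)
    _ = x ^ s * (Gamma x ^ (1 - s) * Gamma x ^ s) := by
      rw [Gamma_add_one hx.ne', mul_rpow hx.le hΓ.le]
      ring
    _ = x ^ s * Gamma x := by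
      rw [← rpow_add hΓ, sub_add_cancel, rpow_one]

lemma Gamma_add_half_sq_le (hx : 0 < x) :
    Gamma (x + 1 / 2) ^ 2 ≤ x * Gamma x ^ 2 := by
  calc Gamma (x + 1 / 2) ^ 2 ≤ (x ^ (1 / 2 : ℝ) * Gamma x) ^ 2 := by
        gcongr
        exact Gamma_add_le_rpow_mul_Gamma hx (by norm_num) (by norm_num)
    _ = x * Gamma x ^ 2 := by rw [mul_pow, ← sqrt_eq_rpow, sq_sqrt hx.le]

lemma sq_mul_Gamma_sq_le (hx : 0 < x) :
    x ^ 2 * Gamma x ^ 2 ≤ (x + 1 / 2) * Gamma (x + 1 / 2) ^ 2 := by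
  have h := Gamma_add_half_sq_le (x := x + 1 / 2) (by positivity)
  rwa [add_assoc, add_halves, Gamma_add_one hx.ne', mul_pow] at h

end Gamma

/-- The square of Wendel's ratio `x ^ s * Γ(x) / Γ(x + s)` at `s = 1 / 2`, which measures the error
in the approximation `Γ(x + 1/2) ≈ √x Γ(x)`. -/
noncomputable def wendelRatioSq (x : ℝ) : ℝ :=
  x * Gamma x ^ 2 / Gamma (x + 1 / 2) ^ 2

section WendelRatioSq

variable {x : ℝ}

lemma wendelRatioSq_pos (hx : 0 < x) : 0 < wendelRatioSq x := by
  unfold wendelRatioSq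
  positivity

lemma one_le_wendelRatioSq (hx : 0 < x) : 1 ≤ wendelRatioSq x :=
  (one_le_div (by positivity)).mpr (Gamma_add_half_sq_le hx)

lemma wendelRatioSq_le (hx : 0 < x) : wendelRatioSq x ≤ 1 + 1 / 2 / x := by
  rw [wendelRatioSq, one_add_div hx.ne', div_le_div_iff₀ (by positivity) hx]
  linarith [sq_mul_Gamma_sq_le hx]

lemma tendsto_wendelRatioSq_atTop : Tendsto wendelRatioSq atTop (𝓝 1) := by
  have hupper : Tendsto (fun x : ℝ ↦ 1 + 1 / 2 / x) atTop (𝓝 1) := by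
    simpa only [add_zero, id] using (tendsto_id.const_div_atTop (1 / 2 : ℝ)).const_add 1
  refine tendsto_of_tendsto_of_tendsto_of_le_of_le' tendsto_const_nhds hupper ?_ ?_
  · filter_upwards [eventually_gt_atTop 0] with x hx using one_le_wendelRatioSq hx
  · filter_upwards [eventually_gt_atTop 0] with x hx using wendelRatioSq_le hx

lemma wendelRatioSq_div_add_one (hx : 0 < x) :
    wendelRatioSq x / wendelRatioSq (x + 1) = 1 + 1 / (4 * (x * (x + 1))) := by
  have hhalf : x + 1 / 2 ≠ 0 := by positivity
  rw [wendelRatioSq, wendelRatioSq, add_right_comm, Gamma_add_one hx.ne',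
    Gamma_add_one hhalf]
  field_simp
  ring

lemma strictAntiOn_wendelRatioSq_div_add_one :
    StrictAntiOn (fun x ↦ wendelRatioSq x / wendelRatioSq (x + 1)) (Ioi 0) := by
  intro x (hx : 0 < x) y (hy : 0 < y) hxy
  simp only [wendelRatioSq_div_add_one hx, wendelRatioSq_div_add_one hy]
  gcongr

lemma strictAntiOn_wendelRatioSq : StrictAntiOn wendelRatioSq (Ioi 0) :=
  strictAntiOn_of_strictAntiOn_div_add_one_of_tendsto (fun _ ↦ wendelRatioSq_pos)
    strictAntiOn_wendelRatioSq_div_add_one tendsto_wendelRatioSq_atTop one_ne_zero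

end WendelRatioSq

/-- The closed form of `absUpdateVariance` with the time step replaced by a real parameter `t`.
It is meaningful for `t > 1`; at `t = 1` the quotient is `0` by the convention on division by
zero. -/
noncomputable def realAbsUpdateVariance (t : ℝ) : ℝ :=
  1 - 4 * t * Gamma (t / 2) ^ 2 /
    ((t - 1) ^ 2 * π * Gamma ((t - 1) / 2) ^ 2)

lemma realAbsUpdateVariance_eq_one_sub_wendelRatioSq {t : ℝ} (ht : 1 < t) :
    realAbsUpdateVariance t = 1 - 2 / π * wendelRatioSq (t / 2) := by
  have hpos : 0 < (t - 1) / 2 := by linarith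
  have ht₁ : t - 1 ≠ 0 := by linarith
  have hshift : Gamma (t / 2 + 1 / 2) = (t - 1) / 2 * Gamma ((t - 1) / 2) := by
    rw [← Gamma_add_one hpos.ne']
    ring_nf
  rw [realAbsUpdateVariance, wendelRatioSq, hshift]
  field_simp
  ring

theorem absUpdateVariance_strictly_increasing_general :
    StrictMonoOn realAbsUpdateVariance (Ioi 1) := by
  intro s (hs : 1 < s) t (ht : 1 < t) hst
  have hanti : wendelRatioSq (t / 2) < wendelRatioSq (s / 2) :=
    strictAntiOn_wendelRatioSq (half_pos (one_pos.trans hs)) (half_pos (one_pos.trans ht))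
      (by linarith)
  rw [realAbsUpdateVariance_eq_one_sub_wendelRatioSq hs,
    realAbsUpdateVariance_eq_one_sub_wendelRatioSq ht]
  gcongr

/-- `v(m) = 1 - 4 m Γ(m/2)² / ((m-1)² π Γ((m-1)/2)²)` is strictly
increasing in the integer `m ≥ 2`. -/
theorem absUpdateVariance_strictly_increasing (m : ℕ) (hm : 2 ≤ m) :
    absUpdateVariance (m + 1) > absUpdateVariance m := by
  have hm₁ : (1 : ℝ) < m := Nat.one_lt_cast.mpr hm
  have hsucc : (m : ℝ) < (m + 1 : ℕ) := Nat.cast_lt.mpr m.lt_succ_self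
  exact absUpdateVariance_strictly_increasing_general hm₁ (hm₁.trans hsucc) hsucc
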